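/- Let v_1, …, v_s ∈ ℤ^n (s ≥ 2) be pairwise distinct primitive vectors, λ_1, …, λ_s ∈ ℝ, and l_j(u) = ⟨u, v_j⟩ − λ_j. Let (δ^{(i)})_{i∈ℕ} be a monotone sequence of real numbers converging to 0. Let T = {u ∈ ℝ^n : the minimum of {l_1(u), …, l_s(u)} is attained by at least two distinct indices} and, for each i, T^{(i)} = {u ∈ ℝ^n : the minimum of {l_1(u) + δ^{(i)}, l_2(u), …, l_s(u)} is attained by at least two distinct indices}. Then T and each T^{(i)} are nonempty, and T^{(i)} converges to T with respect to the Hausdorff distance: for every ε > 0 there exists N such that for all i ≥ N, every point of T is within distance ε of some point of T^{(i)} and every point of T^{(i)} is within distance ε of some point of T. -/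

import Mathlib

open scoped Classical

noncomputable section

/-- Integer inner product `⟨w, v⟩ = ∑ i, w i * v i` on `ℤ^n`. -/
def zdot {n : ℕ} (w v : Fin n → ℤ) : ℤ := ∑ i, w i * v i

/-- A lattice vector is primitive if the gcd of its entries is `1`. -/
def Primitive {n : ℕ} (w : Fin n → ℤ) : Prop := Finset.univ.gcd w = 1

/-- The affine function `l_j(u) = ⟨u, v_j⟩ - λ_j` on Euclidean space. -/
def lfE {n m : ℕ} (v : Fin m → Fin n → ℤ) (lam : Fin m → ℝ) (j : Fin m)
    (u : EuclideanSpace ℝ (Fin n)) : ℝ :=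
  (∑ i, u i * (v j i : ℝ)) - lam j

/-- The tropicalization of the family `{l_1, …, l_s}`: the set of points at which the pointwise
minimum of the family is attained by at least two distinct indices. -/
def TropAll {n s : ℕ} (v : Fin s → Fin n → ℤ) (lam : Fin s → ℝ) :
    Set (EuclideanSpace ℝ (Fin n)) :=
  {u | ∃ j₁ j₂ : Fin s, j₁ ≠ j₂ ∧ lfE v lam j₁ u = lfE v lam j₂ u ∧
        ∀ j : Fin s, lfE v lam j₁ u ≤ lfE v lam j u}

lemma lfE_line {n m : ℕ} (v : Fin m → Fin n → ℤ) (lam : Fin m → ℝ) (j : Fin m)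
    (u W : EuclideanSpace ℝ (Fin n)) (t : ℝ) :
    lfE v lam j (u + t • W) = lfE v lam j u + t * ∑ i, W i * (v j i : ℝ) := by
  simp only [lfE, PiLp.add_apply, PiLp.smul_apply, smul_eq_mul, add_mul, Finset.sum_add_distrib,
    Finset.mul_sum, mul_assoc]
  ring

lemma key {n s : ℕ} (v : Fin s → Fin n → ℤ) (lam : Fin s → ℝ)
    (hdist : Function.Injective v) (u : EuclideanSpace ℝ (Fin n)) (j a : Fin s) (hja : a ≠ j)
    (hj : ∀ k, lfE v lam j u ≤ lfE v lam k u) (D : ℝ)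
    (hD : lfE v lam a u - lfE v lam j u ≤ D) :
    ∃ u' ∈ TropAll v lam, dist u u' ≤ D := by
  have hD0 : 0 ≤ D := by linarith [hj a]
  set W : EuclideanSpace ℝ (Fin n) := WithLp.toLp 2 (fun i => ((v j i : ℝ) - v a i)) with hW
  have hWi : ∀ i, W i = (v j i : ℝ) - v a i := fun i => rfl
  set Q : ℝ := ∑ i, (W i) ^ 2 with hQ
  have hQn : ‖W‖ ^ 2 = Q := by
    rw [EuclideanSpace.norm_sq_eq]; simp [hQ]
  have hQ1 : 1 ≤ Q := by
    have hne : v j ≠ v a := fun h => hja (hdist h).symm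
    obtain ⟨i, hi⟩ := Function.ne_iff.mp hne
    have h1 : (1 : ℤ) ≤ (v j i - v a i) ^ 2 := by
      have : v j i - v a i ≠ 0 := sub_ne_zero.mpr hi
      have := sq_pos_of_ne_zero this
      linarith
    have h2 : (1 : ℝ) ≤ (W i) ^ 2 := by rw [hWi]; exact_mod_cast h1
    exact h2.trans (Finset.single_le_sum (f := fun i => (W i) ^ 2)
      (fun i _ => sq_nonneg _) (Finset.mem_univ i))
  have hQ0 : 0 < Q := by linarith
  have hn1 : 1 ≤ ‖W‖ := by nlinarith [norm_nonneg W]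
  set S := Finset.univ.erase j with hS
  have hSne : S.Nonempty := ⟨a, by simp [hS, hja]⟩
  let g : Fin s → ℝ → ℝ := fun k t => lfE v lam k (u + t • W) - lfE v lam j (u + t • W)
  have hgc : ∀ k, Continuous (g k) := by
    intro k
    simp only [g, lfE_line]
    fun_prop
  let h : ℝ → ℝ := fun t => S.inf' hSne (fun k => g k t)
  have hc : Continuous h := Continuous.finset_inf'_apply hSne (fun k _ => hgc k)
  have hT : 0 ≤ D / Q := by positivity
  have h0 : 0 ≤ h 0 := by
    refine Finset.le_inf' _ _ fun k _ => ?_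
    simp only [g, zero_smul, add_zero]
    linarith [hj k]
  have h1 : h (D / Q) ≤ 0 := by
    refine (Finset.inf'_le (fun k => g k (D / Q)) (by simp [hS, hja] : a ∈ S)).trans ?_
    simp only [g, lfE_line]
    have : ∑ i, W i * (v a i : ℝ) = ∑ i, W i * (v j i : ℝ) - Q := by
      rw [hQ, ← Finset.sum_sub_distrib]
      refine Finset.sum_congr rfl fun i _ => ?_
      rw [hWi]; ring
    rw [this]
    have : D / Q * Q = D := by field_simp
    linarith
  obtain ⟨t, ht, hht⟩ := intermediate_value_Icc' hT hc.continuousOn (show (0 : ℝ) ∈ Set.Icc (h (D / Q)) (h 0) from ⟨h1, h0⟩)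
  obtain ⟨k, hk, hkt⟩ := Finset.exists_mem_eq_inf' hSne (fun k => g k t)
  have hk0 : g k t = 0 := by rw [← hkt]; exact hht
  refine ⟨u + t • W, ⟨j, k, ?_, ?_, ?_⟩, ?_⟩
  · exact (Finset.ne_of_mem_erase hk).symm
  · simp only [g] at hk0; linarith
  · intro m
    by_cases hm : m = j
    · rw [hm]
    · have : h t ≤ g m t := Finset.inf'_le (fun k => g k t) (by simp [hS, hm])
      rw [hht] at this
      simp only [g] at this
      linarith
  · rw [dist_self_add_right, norm_smul, Real.norm_eq_abs, abs_of_nonneg ht.1]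
    calc t * ‖W‖ ≤ D / Q * ‖W‖ := by gcongr; exact ht.2
      _ ≤ D / Q * ‖W‖ ^ 2 := by gcongr; nlinarith
      _ = D := by rw [hQn]; field_simp

lemma exists_minimizer {n s : ℕ} (hs : 2 ≤ s) (v : Fin s → Fin n → ℤ) (lam : Fin s → ℝ)
    (u : EuclideanSpace ℝ (Fin n)) : ∃ j, ∀ k, lfE v lam j u ≤ lfE v lam k u := by
  haveI : Nonempty (Fin s) := ⟨⟨0, by omega⟩⟩
  exact Finite.exists_min (fun k => lfE v lam k u)

lemma trop_nonempty {n s : ℕ} (hs : 2 ≤ s) (v : Fin s → Fin n → ℤ) (lam : Fin s → ℝ)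
    (hdist : Function.Injective v) : (TropAll v lam).Nonempty := by
  obtain ⟨j, hj⟩ := exists_minimizer hs v lam 0
  haveI : Nontrivial (Fin s) := Fin.nontrivial_iff_two_le.mpr hs
  obtain ⟨a, ha⟩ := exists_ne j
  obtain ⟨u, hu, _⟩ := key v lam hdist 0 j a ha hj _ le_rfl
  exact ⟨u, hu⟩

lemma trop_close {n s : ℕ} (hs : 2 ≤ s) (v : Fin s → Fin n → ℤ) (lam lam' : Fin s → ℝ)
    (hdist : Function.Injective v) (d : ℝ) (hd : ∀ k, |lam k - lam' k| ≤ d)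
    (u : EuclideanSpace ℝ (Fin n)) (hu : u ∈ TropAll v lam) :
    ∃ u' ∈ TropAll v lam', dist u u' ≤ 2 * d := by
  obtain ⟨j, hj⟩ := exists_minimizer hs v lam' u
  obtain ⟨a, haj, ha⟩ : ∃ a, a ≠ j ∧ ∀ k, lfE v lam a u ≤ lfE v lam k u := by
    obtain ⟨j₁, j₂, hne, heq, hmin⟩ := hu
    by_cases h : j₁ = j
    · exact ⟨j₂, fun h' => hne (h.trans h'.symm), fun k => heq ▸ hmin k⟩
    · exact ⟨j₁, h, hmin⟩
  refine key v lam' hdist u j a haj hj _ ?_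
  have h1 := ha j
  have h2 := abs_le.mp (hd a)
  have h3 := abs_le.mp (hd j)
  simp only [lfE] at *
  linarith

/-- Let `l_j(u) = ⟨u, v_j⟩ - λ_j` (`s ≥ 2`, pairwise distinct primitive `v_j`)
and let `δ^{(i)}` be a monotone real sequence converging to `0`. Let `T` be the tropicalization
of `{l_1, …, l_s}` and `T^{(i)}` that of `{l_1 + δ^{(i)}, l_2, …, l_s}`. Then `T` and each
`T^{(i)}` are nonempty and `T^{(i)} → T` in the Hausdorff distance sense: for every `ε > 0`
there is `N` such that for `i ≥ N` each point of `T` is within `ε` of `T^{(i)}` and conversely. -/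
theorem statement7 {n s : ℕ} (hs : 2 ≤ s)
    (v : Fin s → Fin n → ℤ) (lam : Fin s → ℝ)
    (hdist : Function.Injective v)
    (hprim : ∀ j, Primitive (v j))
    (δ : ℕ → ℝ) (hmono : Monotone δ ∨ Antitone δ)
    (hδ : Filter.Tendsto δ Filter.atTop (nhds 0)) :
    (TropAll v lam).Nonempty ∧
    (∀ i, (TropAll v (Function.update lam ⟨0, by omega⟩ (lam ⟨0, by omega⟩ - δ i))).Nonempty) ∧
    ∀ ε > (0 : ℝ), ∃ N : ℕ, ∀ i ≥ N,
      (∀ u₁ ∈ TropAll v lam,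
        ∃ u₂ ∈ TropAll v (Function.update lam ⟨0, by omega⟩ (lam ⟨0, by omega⟩ - δ i)),
          dist u₁ u₂ ≤ ε) ∧
      (∀ u₂ ∈ TropAll v (Function.update lam ⟨0, by omega⟩ (lam ⟨0, by omega⟩ - δ i)),
        ∃ u₁ ∈ TropAll v lam, dist u₁ u₂ ≤ ε) := by
  refine ⟨trop_nonempty hs v lam hdist, fun i => trop_nonempty hs v _ hdist, fun ε hε => ?_⟩
  obtain ⟨N, hN⟩ := Metric.tendsto_atTop.mp hδ (ε / 2) (by positivity)
  refine ⟨N, fun i hi => ?_⟩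
  have hi' : |δ i| ≤ ε / 2 := by
    have := hN i hi
    rw [Real.dist_eq, sub_zero] at this
    exact this.le
  have hd : ∀ k, |lam k - Function.update lam ⟨0, by omega⟩ (lam ⟨0, by omega⟩ - δ i) k|
      ≤ ε / 2 := by
    intro k
    by_cases hk : k = ⟨0, by omega⟩
    · subst hk
      simpa using hi'
    · rw [Function.update_of_ne hk]
      simp only [sub_self, abs_zero]
      positivity
  constructor
  · intro u hu
    obtain ⟨u', hu', h⟩ := trop_close hs v _ _ hdist _ hd u hu
    exact ⟨u', hu', by linarith⟩
  · intro u hu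
    obtain ⟨u', hu', h⟩ := trop_close hs v _ _ hdist _
      (fun k => by rw [abs_sub_comm]; exact hd k) u hu
    exact ⟨u', hu', by rw [dist_comm]; linarith⟩
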